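/- Let X be a finite set of points in ℝ² with the L1 metric. If (p,q) and (a,b) are two distinct arrows with ⟨p,q⟩ = ⟨a,b⟩, then p, q, a, b are four distinct points that are the corners of an axis-parallel rectangle, with {p,q} and {a,b} being the two diagonal pairs; that is, {x(p),x(q)} = {x(a),x(b)}, {y(p),y(q)} = {y(a),y(b)}, x(p) ≠ x(q) and y(p) ≠ y(q), and {p,q} ∩ {a,b} = ∅. -/

import Mathlib

noncomputable section
open Classical

/-- The L1 (Manhattan) metric on ℝ². -/
def rho (u v : ℝ × ℝ) : ℝ := |u.1 - v.1| + |u.2 - v.2|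

/-- `z` is between `u` and `v` (w.r.t. the L1 metric): the three points are
pairwise distinct and `ρ(u,v) = ρ(u,z) + ρ(z,v)`. -/
def MBtw (u z v : ℝ × ℝ) : Prop :=
  u ≠ z ∧ z ≠ v ∧ u ≠ v ∧ rho u v = rho u z + rho z v

/-- The line of `X` induced by distinct points `u, v`. -/
def lineThrough (X : Finset (ℝ × ℝ)) (u v : ℝ × ℝ) : Finset (ℝ × ℝ) :=
  X.filter fun z => z = u ∨ z = v ∨ MBtw u z v ∨ MBtw z u v ∨ MBtw u v z

/-- `X` is non-collinear: no line induced by two distinct points of `X` equals `X`. -/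
def NonCollinear (X : Finset (ℝ × ℝ)) : Prop :=
  ∀ u ∈ X, ∀ v ∈ X, u ≠ v → lineThrough X u v ≠ X

/-- `{p,q}` is an increasing pair. -/
def IncPair (p q : ℝ × ℝ) : Prop := 0 < (q.1 - p.1) * (q.2 - p.2)

/-- `{p,q}` is a decreasing pair. -/
def DecPair (p q : ℝ × ℝ) : Prop := (q.1 - p.1) * (q.2 - p.2) < 0

/-- The partial order `≤_I`. -/
def leI (c d : ℝ × ℝ) : Prop := c.1 ≤ d.1 ∧ c.2 ≤ d.2

/-- `c <_I d`. -/
def ltI (c d : ℝ × ℝ) : Prop := leI c d ∧ c ≠ d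

/-- The partial order `≤_D`. -/
def leD (c d : ℝ × ℝ) : Prop := c.1 ≤ d.1 ∧ d.2 ≤ c.2

/-- `c <_D d`. -/
def ltD (c d : ℝ × ℝ) : Prop := leD c d ∧ c ≠ d

/-- `(p,q)` is a blue arrow of `X`. -/
def BlueArrow (X : Finset (ℝ × ℝ)) (p q : ℝ × ℝ) : Prop :=
  p ∈ X ∧ q ∈ X ∧ IncPair p q ∧ ltI p q ∧
  ∀ a b, a ∈ X → b ∈ X → IncPair a b → ltI a b →
    lineThrough X a b = lineThrough X p q → (ltI q b ∨ (q = b ∧ leI a p))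

/-- `(p,q)` is a red arrow of `X`. -/
def RedArrow (X : Finset (ℝ × ℝ)) (p q : ℝ × ℝ) : Prop :=
  p ∈ X ∧ q ∈ X ∧ DecPair p q ∧ ltD p q ∧
  ∀ a b, a ∈ X → b ∈ X → DecPair a b → ltD a b →
    lineThrough X a b = lineThrough X p q → (ltD q b ∨ (q = b ∧ leD a p))

/-- An arrow is a blue or a red arrow. -/
def Arrow (X : Finset (ℝ × ℝ)) (p q : ℝ × ℝ) : Prop :=
  BlueArrow X p q ∨ RedArrow X p q

/-- `a` is not an endpoint of any arrow of `X`. -/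
def NotEndpoint (X : Finset (ℝ × ℝ)) (a : ℝ × ℝ) : Prop :=
  ∀ p q, Arrow X p q → a ≠ p ∧ a ≠ q

/-!
Points on the line of an increasing pair `p, q` lie in one of the three regions `z ≤ p`, `p ≤ z ≤ q`
and `q ≤ z` of the product order, and points of different regions are comparable. Hence the two
points of a decreasing pair on that line share a region, and the same holds with the colours
exchanged. If the two lines coincide, the only compatible choice is that each pair lies in the box
spanned by the other, so both are diagonals of one rectangle. Two arrows of the same colour with the
same line coincide, being minimal for the same lexicographic order.
-/

section BoxCollinear

open OrderDual Set

/-- One of the three points lies in the box spanned by the other two. In `ℝ × ℝ` this is the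
equality case of the `L1` triangle inequality, and points are allowed to coincide. -/
def BoxCollinear {α : Type*} [Lattice α] (u v z : α) : Prop :=
  z ∈ uIcc u v ∨ u ∈ uIcc z v ∨ v ∈ uIcc u z

/-- The identity from `α × β` to `α × βᵒᵈ`. It transports the paper's order `≤_D` to the product
order, so that facts about increasing pairs apply to decreasing ones. -/
def dualSnd {α β : Type*} (z : α × β) : α × βᵒᵈ := (z.1, toDual z.2)

variable {α β : Type*}

lemma dualSnd_injective : Function.Injective (dualSnd : α × β → α × βᵒᵈ) :=
  fun _ _ h => h

lemma dualSnd_mem_uIcc_iff [Lattice α] [Lattice β] {u v z : α × β} :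
    dualSnd z ∈ uIcc (dualSnd u) (dualSnd v) ↔ z ∈ uIcc u v := by
  simp only [uIcc_prod_eq, mem_prod, dualSnd, uIcc_toDual, mem_preimage, ofDual_toDual]

lemma BoxCollinear.map_dualSnd [Lattice α] [Lattice β] {u v z : α × β}
    (h : BoxCollinear u v z) : BoxCollinear (dualSnd u) (dualSnd v) (dualSnd z) := by
  simpa only [BoxCollinear, dualSnd_mem_uIcc_iff] using h

lemma both_le_or_both_mem_Icc_or_both_ge_of_not_le [Preorder α] {p q a b : α}
    (hpq : p ≤ q) (hab : ¬ a ≤ b) (hba : ¬ b ≤ a)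
    (ha : a ≤ p ∨ a ∈ Icc p q ∨ q ≤ a) (hb : b ≤ p ∨ b ∈ Icc p q ∨ q ≤ b) :
    (a ≤ p ∧ b ≤ p) ∨ (a ∈ Icc p q ∧ b ∈ Icc p q) ∨ (q ≤ a ∧ q ≤ b) := by
  simp only [mem_Icc] at ha hb ⊢
  grind

variable [LinearOrder α] [LinearOrder β] {p q a b z : α × β}

lemma BoxCollinear.le_or_mem_Icc_or_ge (h : BoxCollinear p q z)
    (h₁ : p.1 < q.1) (h₂ : p.2 < q.2) : z ≤ p ∨ z ∈ Icc p q ∨ q ≤ z := by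
  rcases h with hz | hp | hq
  · exact .inr (.inl (uIcc_of_le (Prod.le_def.2 ⟨h₁.le, h₂.le⟩) ▸ hz))
  · left
    simp only [uIcc_prod_eq, mem_prod, mem_uIcc] at hp
    exact ⟨by grind, by grind⟩
  · right; right
    simp only [uIcc_prod_eq, mem_prod, mem_uIcc] at hq
    exact ⟨by grind, by grind⟩

lemma BoxCollinear.both_le_or_both_mem_Icc_or_both_ge
    (ha : BoxCollinear p q a) (hb : BoxCollinear p q b)
    (hpq₁ : p.1 < q.1) (hpq₂ : p.2 < q.2) (hab₁ : a.1 < b.1) (hab₂ : b.2 < a.2) :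
    (a ≤ p ∧ b ≤ p) ∨ (a ∈ Icc p q ∧ b ∈ Icc p q) ∨ (q ≤ a ∧ q ≤ b) :=
  both_le_or_both_mem_Icc_or_both_ge_of_not_le ⟨hpq₁.le, hpq₂.le⟩
    (fun h => hab₂.not_ge h.2) (fun h => hab₁.not_ge h.1)
    (ha.le_or_mem_Icc_or_ge hpq₁ hpq₂) (hb.le_or_mem_Icc_or_ge hpq₁ hpq₂)

lemma eq_corners_of_boxCollinear (hpq₁ : p.1 < q.1) (hpq₂ : p.2 < q.2)
    (hab₁ : a.1 < b.1) (hab₂ : b.2 < a.2)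
    (ha : BoxCollinear p q a) (hb : BoxCollinear p q b)
    (hp : BoxCollinear a b p) (hq : BoxCollinear a b q) :
    a = (p.1, q.2) ∧ b = (q.1, p.2) := by
  have hpq := ha.both_le_or_both_mem_Icc_or_both_ge hb hpq₁ hpq₂ hab₁ hab₂
  have hab :=
    hp.map_dualSnd.both_le_or_both_mem_Icc_or_both_ge hq.map_dualSnd hab₁ hab₂ hpq₁ hpq₂
  simp only [Prod.le_def, mem_Icc, dualSnd, toDual_le_toDual] at hpq hab
  -- In an outer region of `hpq` one of the intervals `[a.1, b.1]` and `[p.1, q.1]` ends before the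
  -- other starts, and likewise in the second coordinate in the same direction; no case of `hab`
  -- allows this.
  have hab_in : (p.1 ≤ a.1 ∧ a.2 ≤ q.2) ∧ b.1 ≤ q.1 ∧ p.2 ≤ b.2 := by
    rcases hpq with h_below | h_in | h_above <;> grind
  have hpq_in : (a.1 ≤ p.1 ∧ q.2 ≤ a.2) ∧ q.1 ≤ b.1 ∧ b.2 ≤ p.2 := by
    rcases hab with h_below | h_in | h_above <;> grind
  exact ⟨Prod.ext (hpq_in.1.1.antisymm hab_in.1.1) (hab_in.1.2.antisymm hpq_in.1.2),
    Prod.ext (hab_in.2.1.antisymm hpq_in.2.1) (hpq_in.2.2.antisymm hab_in.2.2)⟩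

end BoxCollinear

section Lines

lemma abs_sub_add_abs_sub_eq_iff_mem_uIcc {α : Type*} [AddCommGroup α] [LinearOrder α]
    [IsOrderedAddMonoid α] {x y z : α} : |x - z| + |z - y| = |x - y| ↔ z ∈ Set.uIcc x y := by
  rw [← sub_add_sub_cancel x z y, eq_comm, abs_add_eq_add_abs_iff, Set.mem_uIcc]
  simp only [sub_nonneg, sub_nonpos]
  tauto

lemma MBtw.mem_uIcc {u z v : ℝ × ℝ} (h : MBtw u z v) : z ∈ Set.uIcc u v := by
  have hsum : rho u v = rho u z + rho z v := h.2.2.2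
  have h₁ := abs_sub_le u.1 z.1 v.1
  have h₂ := abs_sub_le u.2 z.2 v.2
  unfold rho at hsum
  rw [Set.uIcc_prod_eq]
  exact ⟨abs_sub_add_abs_sub_eq_iff_mem_uIcc.1 (by linarith),
    abs_sub_add_abs_sub_eq_iff_mem_uIcc.1 (by linarith)⟩

/-- The line through `u` and `v` in an arbitrary point set, extending `lineThrough` beyond finite
sets. -/
def setLine (X : Set (ℝ × ℝ)) (u v : ℝ × ℝ) : Set (ℝ × ℝ) :=
  {z ∈ X | z = u ∨ z = v ∨ MBtw u z v ∨ MBtw z u v ∨ MBtw u v z}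

lemma coe_lineThrough (X : Finset (ℝ × ℝ)) (u v : ℝ × ℝ) :
    (lineThrough X u v : Set (ℝ × ℝ)) = setLine X u v :=
  Finset.coe_filter _ _

variable {X : Set (ℝ × ℝ)} {p q : ℝ × ℝ}

lemma left_mem_setLine (hp : p ∈ X) : p ∈ setLine X p q :=
  ⟨hp, .inl rfl⟩

lemma right_mem_setLine (hq : q ∈ X) : q ∈ setLine X p q :=
  ⟨hq, .inr (.inl rfl)⟩

lemma boxCollinear_of_mem_setLine {z : ℝ × ℝ} (hz : z ∈ setLine X p q) :
    BoxCollinear p q z := by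
  rcases hz.2 with rfl | rfl | h | h | h
  · exact .inl Set.left_mem_uIcc
  · exact .inl Set.right_mem_uIcc
  · exact .inl h.mem_uIcc
  · exact .inr (.inl h.mem_uIcc)
  · exact .inr (.inr h.mem_uIcc)

lemma IncPair.lt_and_lt (h : IncPair p q) (hle : leI p q) : p.1 < q.1 ∧ p.2 < q.2 :=
  ⟨hle.1.lt_of_ne' (sub_ne_zero.1 (left_ne_zero_of_mul h.ne')),
    hle.2.lt_of_ne' (sub_ne_zero.1 (right_ne_zero_of_mul h.ne'))⟩

lemma DecPair.lt_and_lt (h : DecPair p q) (hle : leD p q) : p.1 < q.1 ∧ q.2 < p.2 :=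
  ⟨hle.1.lt_of_ne' (sub_ne_zero.1 (left_ne_zero_of_mul h.ne)),
    hle.2.lt_of_ne (sub_ne_zero.1 (right_ne_zero_of_mul h.ne))⟩

lemma leI_iff_le : leI p q ↔ p ≤ q :=
  Iff.rfl

lemma ltI_iff_lt : ltI p q ↔ p < q := by
  rw [lt_iff_le_and_ne]
  rfl

lemma leD_iff_dualSnd_le : leD p q ↔ dualSnd p ≤ dualSnd q :=
  Iff.rfl

lemma ltD_iff_dualSnd_lt : ltD p q ↔ dualSnd p < dualSnd q := by
  rw [lt_iff_le_and_ne, dualSnd_injective.ne_iff]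
  rfl

end Lines

section Rectangles

variable {X : Set (ℝ × ℝ)} {p q a b : ℝ × ℝ}

/-- `{p, q}` and `{a, b}` are the two diagonals of a nondegenerate axis-parallel rectangle. -/
def AreRectangleDiagonals (p q a b : ℝ × ℝ) : Prop :=
  ({p.1, q.1} : Set ℝ) = {a.1, b.1} ∧ ({p.2, q.2} : Set ℝ) = {a.2, b.2} ∧
    p.1 ≠ q.1 ∧ p.2 ≠ q.2 ∧ ({p, q} : Set (ℝ × ℝ)) ∩ {a, b} = ∅

lemma AreRectangleDiagonals.symm (h : AreRectangleDiagonals p q a b) :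
    AreRectangleDiagonals a b p q := by
  obtain ⟨hfst, hsnd, hne₁, hne₂, hdisj⟩ := h
  exact ⟨hfst.symm, hsnd.symm, by grind [Set.pair_eq_pair_iff], by grind [Set.pair_eq_pair_iff],
    by rwa [Set.inter_comm]⟩

lemma areRectangleDiagonals_corners (h₁ : p.1 ≠ q.1) (h₂ : p.2 ≠ q.2) :
    AreRectangleDiagonals p q (p.1, q.2) (q.1, p.2) := by
  refine ⟨rfl, Set.pair_comm _ _, h₁, h₂, ?_⟩
  rw [Set.eq_empty_iff_forall_notMem]
  rintro z ⟨rfl | rfl, hz⟩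
  · simp [Prod.ext_iff, h₁, h₂] at hz
  · simp [Prod.ext_iff, h₁.symm, h₂.symm] at hz

lemma areRectangleDiagonals_of_setLine_eq
    (hp : p ∈ X) (hq : q ∈ X) (hinc : IncPair p q) (hpq : leI p q)
    (ha : a ∈ X) (hb : b ∈ X) (hdec : DecPair a b) (hab : leD a b)
    (hline : setLine X p q = setLine X a b) : AreRectangleDiagonals p q a b := by
  obtain ⟨hpq₁, hpq₂⟩ := hinc.lt_and_lt hpq
  obtain ⟨hab₁, hab₂⟩ := hdec.lt_and_lt hab
  obtain ⟨rfl, rfl⟩ := eq_corners_of_boxCollinear hpq₁ hpq₂ hab₁ hab₂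
    (boxCollinear_of_mem_setLine (hline ▸ left_mem_setLine ha))
    (boxCollinear_of_mem_setLine (hline ▸ right_mem_setLine hb))
    (boxCollinear_of_mem_setLine (hline ▸ left_mem_setLine hp))
    (boxCollinear_of_mem_setLine (hline ▸ right_mem_setLine hq))
  exact areRectangleDiagonals_corners hpq₁.ne hpq₂.ne

end Rectangles

section Arrows

/-- Blue arrows of an arbitrary point set, extending `BlueArrow` beyond finite sets. -/
def SetBlueArrow (X : Set (ℝ × ℝ)) (p q : ℝ × ℝ) : Prop :=
  p ∈ X ∧ q ∈ X ∧ IncPair p q ∧ ltI p q ∧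
  ∀ a b, a ∈ X → b ∈ X → IncPair a b → ltI a b →
    setLine X a b = setLine X p q → (ltI q b ∨ (q = b ∧ leI a p))

/-- Red arrows of an arbitrary point set, extending `RedArrow` beyond finite sets. -/
def SetRedArrow (X : Set (ℝ × ℝ)) (p q : ℝ × ℝ) : Prop :=
  p ∈ X ∧ q ∈ X ∧ DecPair p q ∧ ltD p q ∧
  ∀ a b, a ∈ X → b ∈ X → DecPair a b → ltD a b →
    setLine X a b = setLine X p q → (ltD q b ∨ (q = b ∧ leD a p))

/-- Blue or red arrows of an arbitrary point set, extending `Arrow` beyond finite sets. -/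
def SetArrow (X : Set (ℝ × ℝ)) (p q : ℝ × ℝ) : Prop :=
  SetBlueArrow X p q ∨ SetRedArrow X p q

lemma setArrow_coe_iff {X : Finset (ℝ × ℝ)} {p q : ℝ × ℝ} :
    SetArrow (X : Set (ℝ × ℝ)) p q ↔ Arrow X p q := by
  simp only [SetArrow, SetBlueArrow, SetRedArrow, Arrow, BlueArrow, RedArrow, ← coe_lineThrough,
    Finset.coe_inj, Finset.mem_coe]

lemma eq_of_lex_le_of_lex_ge {α : Type*} [PartialOrder α] {p q a b : α}
    (h : q < b ∨ q = b ∧ a ≤ p) (h' : b < q ∨ b = q ∧ p ≤ a) : (p, q) = (a, b) := by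
  have hlex : toLex (q, OrderDual.toDual p) = toLex (b, OrderDual.toDual a) :=
    (Prod.Lex.toLex_le_toLex.2 h).antisymm (Prod.Lex.toLex_le_toLex.2 h')
  obtain ⟨rfl, hdual⟩ := Prod.ext_iff.1 (toLex.injective hlex)
  exact Prod.ext (OrderDual.toDual.injective hdual) rfl

variable {X : Set (ℝ × ℝ)} {p q a b : ℝ × ℝ}

lemma SetBlueArrow.eq_of_setLine_eq (hpq : SetBlueArrow X p q) (hab : SetBlueArrow X a b)
    (hline : setLine X p q = setLine X a b) : (p, q) = (a, b) := by
  obtain ⟨hp, hq, hinc, hlt, hmin⟩ := hpq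
  obtain ⟨ha, hb, hinc', hlt', hmin'⟩ := hab
  have h := hmin a b ha hb hinc' hlt' hline.symm
  have h' := hmin' p q hp hq hinc hlt hline
  rw [ltI_iff_lt, leI_iff_le] at h h'
  exact eq_of_lex_le_of_lex_ge h h'

lemma SetRedArrow.eq_of_setLine_eq (hpq : SetRedArrow X p q) (hab : SetRedArrow X a b)
    (hline : setLine X p q = setLine X a b) : (p, q) = (a, b) := by
  obtain ⟨hp, hq, hdec, hlt, hmin⟩ := hpq
  obtain ⟨ha, hb, hdec', hlt', hmin'⟩ := hab
  have h := hmin a b ha hb hdec' hlt' hline.symm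
  have h' := hmin' p q hp hq hdec hlt hline
  rw [ltD_iff_dualSnd_lt, ← dualSnd_injective.eq_iff, leD_iff_dualSnd_le] at h h'
  exact (dualSnd_injective.prodMap dualSnd_injective) (eq_of_lex_le_of_lex_ge h h')

lemma SetBlueArrow.areRectangleDiagonals (hpq : SetBlueArrow X p q) (hab : SetRedArrow X a b)
    (hline : setLine X p q = setLine X a b) : AreRectangleDiagonals p q a b := by
  obtain ⟨hp, hq, hinc, hlt, -⟩ := hpq
  obtain ⟨ha, hb, hdec, hlt', -⟩ := hab
  exact areRectangleDiagonals_of_setLine_eq hp hq hinc hlt.1 ha hb hdec hlt'.1 hline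

theorem distinct_arrows_same_line_rectangle_general (hpq : SetArrow X p q) (hab : SetArrow X a b)
    (hne : (p, q) ≠ (a, b)) (hline : setLine X p q = setLine X a b) :
    AreRectangleDiagonals p q a b := by
  rcases hpq with hpq | hpq <;> rcases hab with hab | hab
  · exact absurd (hpq.eq_of_setLine_eq hab hline) hne
  · exact hpq.areRectangleDiagonals hab hline
  · exact (hab.areRectangleDiagonals hpq hline.symm).symm
  · exact absurd (hpq.eq_of_setLine_eq hab hline) hne

end Arrows

/-- Two distinct arrows induce distinct lines unless they are the two diagonals
of the same axis-parallel rectangle. -/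
theorem distinct_arrows_same_line_rectangle (X : Finset (ℝ × ℝ)) (p q a b : ℝ × ℝ)
    (hpq : Arrow X p q) (hab : Arrow X a b) (hne : (p, q) ≠ (a, b))
    (hline : lineThrough X p q = lineThrough X a b) :
    ({p.1, q.1} : Set ℝ) = {a.1, b.1} ∧ ({p.2, q.2} : Set ℝ) = {a.2, b.2} ∧
    p.1 ≠ q.1 ∧ p.2 ≠ q.2 ∧ ({p, q} : Set (ℝ × ℝ)) ∩ {a, b} = ∅ :=
  distinct_arrows_same_line_rectangle_general (setArrow_coe_iff.2 hpq) (setArrow_coe_iff.2 hab) hne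
    (by simp only [← coe_lineThrough, hline])
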